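/- arXiv:nlin/0402026 — 7 statements merged into one kernel-verified Lean document; each statement's English description precedes it below -/
import Mathlib

section
/- Let V be a finite-dimensional real vector space and let P₀, P₁ : V* → V be linear maps that are skew-symmetric with respect to the duality pairing, i.e. ⟨α, P·β⟩ = −⟨β, P·α⟩ for all covectors α, β, for P = P₀ and P = P₁. Suppose α, β ∈ V* and real numbers λ_α ≠ λ_β satisfy P₁α = λ_α·P₀α and P₁β = λ_β·P₀β. Then ⟨α, P₀β⟩ = 0 and ⟨α, P₁β⟩ = 0; that is, eigenvectors of the bihamiltonian pair (P₁, P₀) belonging to different eigenvalues are in involution with respect to both structures. -/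
/-- Eigenvectors of a bihamiltonian pair of skew-symmetric maps belonging to
different eigenvalues are in involution with respect to both structures. -/
theorem bihamiltonian_eigenvectors_in_involution
    (V : Type*) [AddCommGroup V] [Module ℝ V] [FiniteDimensional ℝ V]
    (P₀ P₁ : Module.Dual ℝ V →ₗ[ℝ] V)
    (hP₀ : ∀ a b : Module.Dual ℝ V, a (P₀ b) = - b (P₀ a))
    (hP₁ : ∀ a b : Module.Dual ℝ V, a (P₁ b) = - b (P₁ a))
    (α β : Module.Dual ℝ V) (lα lβ : ℝ) (hne : lα ≠ lβ)
    (hα : P₁ α = lα • P₀ α) (hβ : P₁ β = lβ • P₀ β) :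
    α (P₀ β) = 0 ∧ α (P₁ β) = 0 := by
  have h1 := hP₁ α β
  have h0 := hP₀ α β
  rw [hα, hβ, map_smul, map_smul, smul_eq_mul, smul_eq_mul] at h1
  have h : α (P₀ β) = 0 := by
    have h2 : (lα - lβ) * α (P₀ β) = 0 := by
      linear_combination lα * h0 - h1
    exact (mul_eq_zero.mp h2).resolve_left (sub_ne_zero.mpr hne)
  exact ⟨h, by rw [hβ, map_smul, h, smul_zero]⟩
end

section
/- Fix integers n ≥ 2 and r ≥ 1, a commutative ring R, n-tuples (A_1,…,A_n) and (α_1,…,α_n) of r×r matrices over R, and λ ∈ R. Define for each i = 1,…,n the matrix X_i(λ) = Σ_{k=1}^{i−1}[A_k, α_k − α_i] + [A_i, (i−1−λ)·α_i + Σ_{k=i+1}^{n} α_k]. Then for every a with 2 ≤ a ≤ n, (λ−a+2)·X_a(λ) + Σ_{j=1}^{a−1} X_j(λ) = [L_a(λ), M_a(λ)], where L_a(λ) = (λ−a+2)·A_a + Σ_{k=1}^{a−1} A_k and M_a(λ) = (a−1−λ)·α_a + Σ_{k=a+1}^{n} α_k. In other words, along any vector field Hamiltonian with respect to the Poisson pencil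 R − λP of the homogeneous sl(r) Gaudin model, each Lax matrix L_a(λ) evolves according to a Lax equation. -/
open Finset

/-- Along any vector field Hamiltonian w.r.t. the Poisson pencil `R − λP` of the
homogeneous `sl(r)` Gaudin model, each Lax matrix `L_a(λ)` evolves according to
a Lax equation `L̇_a = [L_a(λ), M_a(λ)]`. -/
theorem gaudin_lax_equation (n r : ℕ) (hn : 2 ≤ n) (hr : 1 ≤ r)
    (R : Type*) [CommRing R]
    (A α : ℕ → Matrix (Fin r) (Fin r) R) (lam : R)
    (X : ℕ → Matrix (Fin r) (Fin r) R)
    (hX : ∀ i, X i =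
      ∑ k ∈ Icc 1 (i - 1), (A k * (α k - α i) - (α k - α i) * A k)
      + (A i * (((i : R) - 1 - lam) • α i + ∑ k ∈ Icc (i + 1) n, α k)
         - (((i : R) - 1 - lam) • α i + ∑ k ∈ Icc (i + 1) n, α k) * A i))
    (a : ℕ) (ha2 : 2 ≤ a) (han : a ≤ n) :
    (lam - (a : R) + 2) • X a + ∑ j ∈ Icc 1 (a - 1), X j
      = ((lam - (a : R) + 2) • A a + ∑ k ∈ Icc 1 (a - 1), A k)
          * (((a : R) - 1 - lam) • α a + ∑ k ∈ Icc (a + 1) n, α k)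
        - (((a : R) - 1 - lam) • α a + ∑ k ∈ Icc (a + 1) n, α k)
          * ((lam - (a : R) + 2) • A a + ∑ k ∈ Icc 1 (a - 1), A k) := by
  have hT : ∀ m, m + 1 ≤ n →
      ∑ k ∈ Icc (m + 1) n, α k = α (m + 1) + ∑ k ∈ Icc (m + 1 + 1) n, α k := by
    intro m hm
    rw [← Finset.insert_Icc_add_one_left_eq_Icc hm, Finset.sum_insert (by simp)]
  have key : ∀ m : ℕ, m ≤ n → ∑ j ∈ Icc 1 m, X j =
      ∑ k ∈ Icc 1 m, (A k * (((m : R) - 1 - lam) • α k + ∑ l ∈ Icc (m + 1) n, α l)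
        - (((m : R) - 1 - lam) • α k + ∑ l ∈ Icc (m + 1) n, α l) * A k) := by
    intro m
    induction m with
    | zero => intro _; simp
    | succ m ih =>
      intro hm
      rw [Finset.sum_Icc_succ_top (by omega), Finset.sum_Icc_succ_top (by omega),
        ih (by omega), hX (m + 1), Nat.add_sub_cancel, ← add_assoc, ← Finset.sum_add_distrib]
      congr 1
      apply Finset.sum_congr rfl
      intro k _
      rw [hT m hm]
      push_cast
      simp only [mul_add, add_mul, mul_sub, sub_mul, Matrix.mul_smul, Matrix.smul_mul]
      module
  obtain ⟨m, rfl⟩ : ∃ m, a = m + 1 := ⟨a - 1, by omega⟩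
  rw [Nat.add_sub_cancel, key m (by omega), hX (m + 1), Nat.add_sub_cancel, hT m han]
  generalize hM : (((m + 1 : ℕ) : R) - 1 - lam) • α (m + 1)
    + ∑ k ∈ Icc (m + 1 + 1) n, α k = M
  rw [add_mul, mul_add M, Finset.sum_mul, Finset.mul_sum, smul_add,
    Finset.smul_sum, add_right_comm, ← Finset.sum_add_distrib, add_sub_add_comm,
    ← Finset.sum_sub_distrib, add_comm]
  congr 1
  · rw [Matrix.smul_mul, Matrix.mul_smul, smul_sub]
  · apply Finset.sum_congr rfl
    intro k _
    rw [← hM]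
    push_cast
    simp only [mul_add, add_mul, mul_sub, sub_mul, Matrix.mul_smul, Matrix.smul_mul]
    module
end

section
/- Fix integers n ≥ 2 and r ≥ 1, a commutative ring R, n-tuples (A_1,…,A_n) and (α_1,…,α_n) of r×r matrices over R, and scalars λ, ξ ∈ R. With X_i(λ) = Σ_{k=1}^{i−1}[A_k, α_k − α_i] + [A_i, (i−1−λ)·α_i + Σ_{k=i+1}^{n} α_k] and L_a(λ) = (λ−a+2)·A_a + Σ_{k=1}^{a−1} A_k (for 2 ≤ a ≤ n), one has Tr( adjugate(ξ·I − L_a(λ)) · ((λ−a+2)·X_a(λ) + Σ_{j=1}^{a−1} X_j(λ)) ) = 0. Since Tr(adjugate(ξ·I − L_a(λ))·N) is the directional derivative of det(ξ·I − L_a(λ)) in the direction N of the Lax matrix, this says that all coefficients of the characteristic polynomial of every Lax matrix L_a(λ) are Casimir functions of the Poisson pencil R − λP. -/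
open Finset

theorem gaudin_peel {M : Type*} [AddCommMonoid M] (f : ℕ → M) {m n : ℕ} (h : m + 1 ≤ n) :
    ∑ k ∈ Icc (m + 1) n, f k = f (m + 1) + ∑ k ∈ Icc (m + 1 + 1) n, f k := by
  rw [← Finset.insert_Icc_add_one_left_eq_Icc h, Finset.sum_insert (by simp)]

theorem gaudin_trace {r : ℕ} {R : Type*} [CommRing R] (L B : Matrix (Fin r) (Fin r) R) (ξ : R) :
    Matrix.trace (Matrix.adjugate (ξ • (1 : Matrix (Fin r) (Fin r) R) - L) * (L * B - B * L))
      = 0 := by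
  have h : L * B - B * L = B * (ξ • (1 : Matrix (Fin r) (Fin r) R) - L)
      - (ξ • (1 : Matrix (Fin r) (Fin r) R) - L) * B := by
    simp [mul_sub, sub_mul]
  rw [h]
  generalize ξ • (1 : Matrix (Fin r) (Fin r) R) - L = N
  rw [mul_sub, Matrix.trace_sub, ← mul_assoc, ← mul_assoc, Matrix.trace_mul_comm (N.adjugate * B),
    ← mul_assoc, Matrix.adjugate_mul, Matrix.mul_adjugate, sub_self]

/-- All coefficients of the characteristic polynomial of every Lax matrix
`L_a(λ)` are Casimirs of the Poisson pencil `R − λP` of the homogeneous `sl(r)`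
Gaudin model: the directional derivative of `det(ξ·I − L_a(λ))` along the
pencil's Hamiltonian vector field vanishes. -/
theorem gaudin_charpoly_casimir (n r : ℕ) (hn : 2 ≤ n) (hr : 1 ≤ r)
    (R : Type*) [CommRing R]
    (A α : ℕ → Matrix (Fin r) (Fin r) R) (lam ξ : R)
    (X : ℕ → Matrix (Fin r) (Fin r) R)
    (hX : ∀ i, X i =
      ∑ k ∈ Icc 1 (i - 1), (A k * (α k - α i) - (α k - α i) * A k)
      + (A i * (((i : R) - 1 - lam) • α i + ∑ k ∈ Icc (i + 1) n, α k)
         - (((i : R) - 1 - lam) • α i + ∑ k ∈ Icc (i + 1) n, α k) * A i))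
    (a : ℕ) (ha2 : 2 ≤ a) (han : a ≤ n) :
    Matrix.trace
      (Matrix.adjugate
          (ξ • (1 : Matrix (Fin r) (Fin r) R)
            - ((lam - (a : R) + 2) • A a + ∑ k ∈ Icc 1 (a - 1), A k))
        * ((lam - (a : R) + 2) • X a + ∑ j ∈ Icc 1 (a - 1), X j)) = 0 := by
  have key : ∀ m : ℕ, m ≤ n → ∑ j ∈ Icc 1 m, X j =
      ∑ k ∈ Icc 1 m, (A k * (((m : R) - 1 - lam) • α k + ∑ k ∈ Icc (m + 1) n, α k)
        - (((m : R) - 1 - lam) • α k + ∑ k ∈ Icc (m + 1) n, α k) * A k) := by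
    intro m
    induction m with
    | zero => intro _; simp
    | succ m ih =>
      intro hm
      rw [Finset.sum_Icc_succ_top (by omega), Finset.sum_Icc_succ_top (by omega),
        ih (by omega), hX (m + 1), ← add_assoc]
      congr 1
      rw [Nat.add_sub_cancel, ← Finset.sum_add_distrib]
      refine Finset.sum_congr rfl fun k _ => ?_
      rw [gaudin_peel α hm]
      push_cast
      simp only [mul_add, add_mul, mul_sub, sub_mul, sub_smul, add_smul, one_smul, mul_smul_comm,
        smul_mul_assoc]
      abel
  obtain ⟨b, rfl⟩ : ∃ b, a = b + 1 := ⟨a - 1, by omega⟩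
  have hk := key b (by omega)
  rw [gaudin_peel α han] at hk
  rw [Nat.add_sub_cancel, hk, hX (b + 1), Nat.add_sub_cancel]
  generalize ∑ k ∈ Icc (b + 1 + 1) n, α k = β
  obtain ⟨c, hc⟩ : ∃ c, c = lam - ((b + 1 : ℕ) : R) + 2 := ⟨_, rfl⟩
  have h1 : ((b + 1 : ℕ) : R) - 1 - lam = 1 - c := by rw [hc]; ring
  have h2 : (b : R) - 1 - lam = - c := by rw [hc]; push_cast; ring
  rw [h1, h2, ← hc]
  rw [← gaudin_trace (c • A (b + 1) + ∑ k ∈ Icc 1 b, A k) ((1 - c) • α (b + 1) + β) ξ]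
  congr 2
  generalize A (b + 1) = P
  generalize α (b + 1) = Q
  simp only [add_mul, mul_add, Finset.sum_mul, Finset.mul_sum, Finset.smul_sum, smul_add,
    smul_sub, mul_sub, sub_mul, sub_smul, one_smul, mul_smul_comm, smul_mul_assoc, neg_smul,
    mul_neg, neg_mul, Finset.sum_add_distrib, Finset.sum_sub_distrib, Finset.sum_neg_distrib]
  abel
end

section
/- Fix integers n ≥ 2, r ≥ 1 and m ≥ 0, a commutative ring R, n-tuples (A_1,…,A_n) and (α_1,…,α_n) of r×r matrices over R, and λ ∈ R. With X_i(λ) = Σ_{k=1}^{i−1}[A_k, α_k − α_i] + [A_i, (i−1−λ)·α_i + Σ_{k=i+1}^{n} α_k] and L_a(λ) = (λ−a+2)·A_a + Σ_{k=1}^{a−1} A_k (for 2 ≤ a ≤ n), one has Tr( L_a(λ)^m · ((λ−a+2)·X_a(λ) + Σ_{j=1}^{a−1} X_j(λ)) ) = 0. This expresses that the spectral invariants Tr(L_a(λ)^{m+1}) of the Lax matrices are Casimirs of the Poisson pencil R − λP. -/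
open Finset

theorem gaudin_aux_X {r : ℕ} {R : Type*} [CommRing R]
    (A α : ℕ → Matrix (Fin r) (Fin r) R) (b : ℕ) (x : Matrix (Fin r) (Fin r) R) :
    ∑ k ∈ Icc 1 b, (A k * (α k - x) - (α k - x) * A k)
      = ∑ k ∈ Icc 1 b, (A k * α k - α k * A k)
        - ((∑ k ∈ Icc 1 b, A k) * x - x * ∑ k ∈ Icc 1 b, A k) := by
  rw [Finset.sum_mul, Finset.mul_sum, ← Finset.sum_sub_distrib, ← Finset.sum_sub_distrib]
  refine Finset.sum_congr rfl fun k _ => ?_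
  noncomm_ring

theorem gaudin_aux_sum {n r : ℕ} {R : Type*} [CommRing R]
    (A α : ℕ → Matrix (Fin r) (Fin r) R) (lam : R)
    (X : ℕ → Matrix (Fin r) (Fin r) R)
    (hX : ∀ i, X i =
      ∑ k ∈ Icc 1 (i - 1), (A k * (α k - α i) - (α k - α i) * A k)
      + (A i * (((i : R) - 1 - lam) • α i + ∑ k ∈ Icc (i + 1) n, α k)
         - (((i : R) - 1 - lam) • α i + ∑ k ∈ Icc (i + 1) n, α k) * A i))
    (b : ℕ) (hb : b ≤ n) :
    ∑ j ∈ Icc 1 b, X j = ((b : R) - 1 - lam) • ∑ k ∈ Icc 1 b, (A k * α k - α k * A k)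
      + ((∑ k ∈ Icc 1 b, A k) * (∑ k ∈ Icc (b + 1) n, α k)
        - (∑ k ∈ Icc (b + 1) n, α k) * (∑ k ∈ Icc 1 b, A k)) := by
  induction b with
  | zero => simp
  | succ b ih =>
    have hT : ∑ k ∈ Icc (b + 1) n, α k = α (b + 1) + ∑ k ∈ Icc (b + 1 + 1) n, α k := by
      rw [← Finset.add_sum_Ioc_eq_sum_Icc hb]
      congr 1; refine Finset.sum_congr ?_ fun _ _ => rfl; ext k; simp only [Finset.mem_Ioc, Finset.mem_Icc]; omega
    have h1 : 1 ≤ b + 1 := by omega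
    rw [Finset.sum_Icc_succ_top h1, Finset.sum_Icc_succ_top h1, Finset.sum_Icc_succ_top h1,
      ih (by omega), hX (b + 1), Nat.add_sub_cancel, gaudin_aux_X, hT]
    generalize ∑ k ∈ Icc (b + 1 + 1) n, α k = T
    generalize ∑ k ∈ Icc 1 b, (A k * α k - α k * A k) = D
    generalize ∑ k ∈ Icc 1 b, A k = S
    push_cast
    simp only [mul_add, add_mul, smul_mul_assoc, mul_smul_comm]
    module

/-- The spectral invariants `Tr(L_a(λ)^{m+1})` of the Lax matrices of the
homogeneous `sl(r)` Gaudin model are Casimirs of the Poisson pencil `R − λP`: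
`Tr(L_a(λ)^m · (pencil Hamiltonian vector field)) = 0`. -/
theorem gaudin_spectral_invariants_casimir (n r m : ℕ) (hn : 2 ≤ n) (hr : 1 ≤ r)
    (R : Type*) [CommRing R]
    (A α : ℕ → Matrix (Fin r) (Fin r) R) (lam : R)
    (X : ℕ → Matrix (Fin r) (Fin r) R)
    (hX : ∀ i, X i =
      ∑ k ∈ Icc 1 (i - 1), (A k * (α k - α i) - (α k - α i) * A k)
      + (A i * (((i : R) - 1 - lam) • α i + ∑ k ∈ Icc (i + 1) n, α k)
         - (((i : R) - 1 - lam) • α i + ∑ k ∈ Icc (i + 1) n, α k) * A i))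
    (a : ℕ) (ha2 : 2 ≤ a) (han : a ≤ n) :
    Matrix.trace
      (((lam - (a : R) + 2) • A a + ∑ k ∈ Icc 1 (a - 1), A k) ^ m
        * ((lam - (a : R) + 2) • X a + ∑ j ∈ Icc 1 (a - 1), X j)) = 0 := by
  obtain ⟨b, rfl⟩ : ∃ b, a = b + 1 := ⟨a - 1, by omega⟩
  have hT : ∑ k ∈ Icc (b + 1) n, α k = α (b + 1) + ∑ k ∈ Icc (b + 1 + 1) n, α k := by
    rw [← Finset.add_sum_Ioc_eq_sum_Icc han]
    congr 1; refine Finset.sum_congr ?_ fun _ _ => rfl; ext k; simp only [Finset.mem_Ioc, Finset.mem_Icc]; omega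
  rw [Nat.add_sub_cancel, gaudin_aux_sum A α lam X hX b (by omega), hX (b + 1),
    Nat.add_sub_cancel, gaudin_aux_X, hT]
  generalize ∑ k ∈ Icc (b + 1 + 1) n, α k = T
  generalize ∑ k ∈ Icc 1 b, (A k * α k - α k * A k) = D
  generalize ∑ k ∈ Icc 1 b, A k = S
  push_cast
  set c : R := lam - ((b : R) + 1) + 2 with hc
  have hl : lam = c + b - 1 := by rw [hc]; ring
  set L := c • A (b + 1) + S with hL
  set B := (1 - c) • α (b + 1) + T with hB
  have key : c • (D - (S * α (b + 1) - α (b + 1) * S)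
      + (A (b + 1) * (((b : R) + 1 - 1 - lam) • α (b + 1) + T)
        - (((b : R) + 1 - 1 - lam) • α (b + 1) + T) * A (b + 1)))
      + (((b : R) - 1 - lam) • D + (S * (α (b + 1) + T) - (α (b + 1) + T) * S))
      = L * B - B * L := by
    rw [hL, hB]
    clear_value c
    subst hl
    simp only [mul_add, add_mul, smul_mul_assoc, mul_smul_comm]
    module
  rw [key, mul_sub, Matrix.trace_sub, ← mul_assoc, ← mul_assoc, Matrix.trace_mul_comm (L ^ m * B) L,
    ← mul_assoc, ← pow_succ, ← pow_succ', sub_self]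
end

section
/- Fix integers n ≥ 2, r ≥ 1 and a with 2 ≤ a ≤ n, a commutative ring R, and an n-tuple (A_1,…,A_n) of r×r matrices over R. Set S_a = Σ_{i=1}^{a} A_i, and apply the R vector-field formula to the gradient n-tuple α_j = A_j for j ≤ a and α_j = 0 for j > a (this is the gradient of ½·Σ_{i=1}^{a} Tr(A_i²)). Then the resulting i-th component Σ_{k=1}^{i−1}[A_k, α_k − α_i] + [A_i, (i−1)·α_i + Σ_{k=i+1}^{n} α_k] equals [A_i, S_a] when i ≤ a, and equals 0 when i > a. Since [A_i, S_a]·1_{i≤a} is exactly the i-th component of the Lie–Poisson (P) vector field of the bending Hamiltonian ½·K_a with K_a = Tr(S_a²), this establishes the Lenard–Magri relation R d(Σ_{i=1}^{a} Tr(A_i²)) = P d K_a. -/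
open Finset

/-- Lenard–Magri relation `R d(Σ_{i≤a} Tr(A_i²)) = P d K_a` for the bending
Hamiltonians: applying the second Poisson structure `R` to the gradient of
`½·Σ_{i=1}^{a} Tr(A_i²)` gives the Lie–Poisson vector field of `½·K_a`, whose
`i`-th component is `[A_i, S_a]` for `i ≤ a` and `0` for `i > a`. -/
theorem gaudin_lenard_magri_bending (n r : ℕ) (hn : 2 ≤ n) (hr : 1 ≤ r)
    (a : ℕ) (ha2 : 2 ≤ a) (han : a ≤ n)
    (R : Type*) [CommRing R]
    (A : ℕ → Matrix (Fin r) (Fin r) R)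
    (α : ℕ → Matrix (Fin r) (Fin r) R)
    (hα : ∀ j, α j = if j ≤ a then A j else 0)
    (S : Matrix (Fin r) (Fin r) R) (hS : S = ∑ i ∈ Icc 1 a, A i) :
    ∀ i, 1 ≤ i → i ≤ n →
      ∑ k ∈ Icc 1 (i - 1), (A k * (α k - α i) - (α k - α i) * A k)
      + (A i * (((i : R) - 1) • α i + ∑ k ∈ Icc (i + 1) n, α k)
         - (((i : R) - 1) • α i + ∑ k ∈ Icc (i + 1) n, α k) * A i)
      = if i ≤ a then A i * S - S * A i else 0 := by
  intro i hi1 hin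
  by_cases hia : i ≤ a
  · rw [if_pos hia]
    have hαi : α i = A i := by rw [hα, if_pos hia]
    have h1 : ∑ k ∈ Icc 1 (i - 1), (A k * (α k - α i) - (α k - α i) * A k)
        = A i * (∑ k ∈ Icc 1 (i - 1), A k) - (∑ k ∈ Icc 1 (i - 1), A k) * A i := by
      rw [Finset.mul_sum, Finset.sum_mul, ← Finset.sum_sub_distrib]
      refine Finset.sum_congr rfl fun k hk => ?_
      have hk' := Finset.mem_Icc.mp hk
      rw [hαi, hα k, if_pos (by omega)]
      noncomm_ring
    have h2 : ∑ k ∈ Icc (i + 1) n, α k = ∑ k ∈ Icc (i + 1) a, A k := by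
      have hsub : Icc (i + 1) a ⊆ Icc (i + 1) n := Finset.Icc_subset_Icc_right han
      rw [← Finset.sum_subset hsub]
      · refine Finset.sum_congr rfl fun k hk => ?_
        rw [hα k, if_pos (Finset.mem_Icc.mp hk).2]
      · intro k hk hk'
        rw [Finset.mem_Icc] at hk hk'
        rw [hα k, if_neg (by omega)]
    have h3 : S = ∑ k ∈ Icc 1 (i - 1), A k + A i + ∑ k ∈ Icc (i + 1) a, A k := by
      have e : Icc 1 a = (Icc 1 (i - 1) ∪ {i}) ∪ Icc (i + 1) a := by
        ext k
        simp only [Finset.mem_union, Finset.mem_Icc, Finset.mem_singleton]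
        omega
      rw [hS, e, Finset.sum_union, Finset.sum_union, Finset.sum_singleton]
      · rw [Finset.disjoint_left]
        intro k
        simp only [Finset.mem_Icc, Finset.mem_singleton]
        omega
      · rw [Finset.disjoint_left]
        intro k
        simp only [Finset.mem_union, Finset.mem_Icc, Finset.mem_singleton]
        omega
    rw [h1, h2, h3, hαi]
    simp only [mul_add, add_mul, Matrix.mul_smul, Matrix.smul_mul]
    abel
  · rw [if_neg hia]
    have hαi : α i = 0 := by rw [hα, if_neg hia]
    have h1 : ∑ k ∈ Icc 1 (i - 1), (A k * (α k - α i) - (α k - α i) * A k) = 0 := by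
      refine Finset.sum_eq_zero fun k _ => ?_
      rw [hαi, hα k]
      split_ifs <;> simp
    have h2 : ∑ k ∈ Icc (i + 1) n, α k = 0 := by
      refine Finset.sum_eq_zero fun k hk => ?_
      have := Finset.mem_Icc.mp hk
      rw [hα k, if_neg (by omega)]
    rw [h1, h2, hαi]
    simp
end

section
/- Fix integers n ≥ 1 and r ≥ 1, a commutative ring R and λ ∈ R. On the R-module of n-tuples X = (X_1,…,X_n) of r×r matrices over R, define the bilinear bracket whose m-th component is ([X,Y]^λ)_m = (m−1−λ)·[X_m, Y_m] + Σ_{i=m+1}^{n} ( [X_m, Y_i] − [X_i, Y_i] + [X_i, Y_m] ), where [A,B] = AB − BA. Then for every λ this bracket is alternating ([X,X]^λ = 0) and satisfies the Jacobi identity, i.e. it defines a Lie algebra structure on n-tuples of r×r matrices. (This Lie algebra structure is the one dual to the linear Poisson pencil R − λP of the homogeneous sl(r) Gaudin model, so the statement expresses that R − λP is a Poisson pencil, i.e. that R is a Poisson structure compatible with the Lie–Poisson structure P.) -/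
open Finset

theorem gaudin_split {M : Type*} [AddCommGroup M] (f : ℕ → M) (m n : ℕ) (h : m + 1 ≤ n) :
    ∑ i ∈ Icc (m + 1) n, f i = f (m + 1) + ∑ i ∈ Icc (m + 1 + 1) n, f i := by
  have : Icc (m + 1) n = insert (m + 1) (Icc (m + 1 + 1) n) := by
    ext x; simp only [mem_Icc, mem_insert]; omega
  rw [this, sum_insert (by simp)]

theorem gaudin_down (n : ℕ) (P : ℕ → Prop) (h0 : P n)
    (hs : ∀ m, m + 1 ≤ n → P (m + 1) → P m) : ∀ m, m ≤ n → P m := by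
  intro m hm
  obtain ⟨k, rfl⟩ := Nat.exists_eq_add_of_le hm
  clear hm
  induction k generalizing m with
  | zero => exact h0
  | succ k ih =>
    refine hs m (by omega) (ih (m + 1) ?_ ?_)
    · rw [show m + 1 + k = m + (k + 1) by omega]; exact h0
    · intro j hj; exact hs j (by omega)

/-- The bracket on `n`-tuples of `r×r` matrices dual to the linear Poisson
pencil `R − λP` of the homogeneous `sl(r)` Gaudin model is alternating and
satisfies the Jacobi identity, i.e. it defines a Lie algebra structure: so
`R − λP` is a Poisson pencil. -/
theorem gaudin_pencil_dual_bracket_lie (n r : ℕ) (hn : 1 ≤ n) (hr : 1 ≤ r)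
    (R : Type*) [CommRing R] (lam : R)
    (B : (ℕ → Matrix (Fin r) (Fin r) R) → (ℕ → Matrix (Fin r) (Fin r) R) →
      ℕ → Matrix (Fin r) (Fin r) R)
    (hB : ∀ X Y m, B X Y m =
      ((m : R) - 1 - lam) • (X m * Y m - Y m * X m)
      + ∑ i ∈ Icc (m + 1) n,
          ((X m * Y i - Y i * X m) - (X i * Y i - Y i * X i)
            + (X i * Y m - Y m * X i))) :
    (∀ X, ∀ m, 1 ≤ m → m ≤ n → B X X m = 0) ∧
    (∀ X Y Z, ∀ m, 1 ≤ m → m ≤ n →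
      B X (B Y Z) m + B Y (B Z X) m + B Z (B X Y) m = 0) := by
  have hB' : ∀ X Y m, B X Y m = ((m : R) - 1 - lam) • (X m * Y m - Y m * X m)
      + ((X m * (∑ i ∈ Icc (m + 1) n, Y i) - (∑ i ∈ Icc (m + 1) n, Y i) * X m)
      - (∑ i ∈ Icc (m + 1) n, (X i * Y i - Y i * X i))
      + ((∑ i ∈ Icc (m + 1) n, X i) * Y m - Y m * (∑ i ∈ Icc (m + 1) n, X i))) := by
    intro X Y m
    rw [hB]
    simp only [sum_add_distrib, sum_sub_distrib, mul_sum, sum_mul]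
  have hS : ∀ X Y m, m ≤ n → ∑ i ∈ Icc (m + 1) n, B X Y i =
      ((∑ i ∈ Icc (m + 1) n, X i) * (∑ i ∈ Icc (m + 1) n, Y i)
        - (∑ i ∈ Icc (m + 1) n, Y i) * (∑ i ∈ Icc (m + 1) n, X i))
      + ((m : R) - 1 - lam) • (∑ i ∈ Icc (m + 1) n, (X i * Y i - Y i * X i)) := by
    intro X Y
    apply gaudin_down
    · simp
    · intro m hm ih
      rw [gaudin_split _ m n hm, ih, hB', gaudin_split X m n hm, gaudin_split Y m n hm,
        gaudin_split (fun i => X i * Y i - Y i * X i) m n hm]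
      generalize ∑ i ∈ Icc (m + 1 + 1) n, (X i * Y i - Y i * X i) = Q
      generalize ∑ i ∈ Icc (m + 1 + 1) n, X i = SX
      generalize ∑ i ∈ Icc (m + 1 + 1) n, Y i = SY
      push_cast
      simp only [mul_add, add_mul]
      module
  have hJ : ∀ X Y Z m, m ≤ n →
      ∑ i ∈ Icc (m + 1) n, (X i * B Y Z i - B Y Z i * X i)
      + ∑ i ∈ Icc (m + 1) n, (Y i * B Z X i - B Z X i * Y i)
      + ∑ i ∈ Icc (m + 1) n, (Z i * B X Y i - B X Y i * Z i)
      = - (((∑ i ∈ Icc (m + 1) n, X i) * (∑ i ∈ Icc (m + 1) n, (Y i * Z i - Z i * Y i))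
          - (∑ i ∈ Icc (m + 1) n, (Y i * Z i - Z i * Y i)) * (∑ i ∈ Icc (m + 1) n, X i))
        + ((∑ i ∈ Icc (m + 1) n, Y i) * (∑ i ∈ Icc (m + 1) n, (Z i * X i - X i * Z i))
          - (∑ i ∈ Icc (m + 1) n, (Z i * X i - X i * Z i)) * (∑ i ∈ Icc (m + 1) n, Y i))
        + ((∑ i ∈ Icc (m + 1) n, Z i) * (∑ i ∈ Icc (m + 1) n, (X i * Y i - Y i * X i))
          - (∑ i ∈ Icc (m + 1) n, (X i * Y i - Y i * X i)) * (∑ i ∈ Icc (m + 1) n, Z i))) := by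
    intro X Y Z
    apply gaudin_down
    · simp
    · intro m hm ih
      rw [gaudin_split (fun i => X i * B Y Z i - B Y Z i * X i) m n hm,
        gaudin_split (fun i => Y i * B Z X i - B Z X i * Y i) m n hm,
        gaudin_split (fun i => Z i * B X Y i - B X Y i * Z i) m n hm,
        gaudin_split X m n hm, gaudin_split Y m n hm, gaudin_split Z m n hm,
        gaudin_split (fun i => X i * Y i - Y i * X i) m n hm,
        gaudin_split (fun i => Y i * Z i - Z i * Y i) m n hm,
        gaudin_split (fun i => Z i * X i - X i * Z i) m n hm]
      have e : ∀ a b c a' b' c' : Matrix (Fin r) (Fin r) R,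
        (a + a') + (b + b') + (c + c') = (a + b + c) + (a' + b' + c') := by
        intros; abel
      rw [e, ih]
      beta_reduce
      rw [hB' X Y, hB' Y Z, hB' Z X]
      generalize ∑ i ∈ Icc (m + 1 + 1) n, (X i * Y i - Y i * X i) = QZ
      generalize ∑ i ∈ Icc (m + 1 + 1) n, (Y i * Z i - Z i * Y i) = QX
      generalize ∑ i ∈ Icc (m + 1 + 1) n, (Z i * X i - X i * Z i) = QY
      generalize ∑ i ∈ Icc (m + 1 + 1) n, X i = SX
      generalize ∑ i ∈ Icc (m + 1 + 1) n, Y i = SY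
      generalize ∑ i ∈ Icc (m + 1 + 1) n, Z i = SZ
      generalize ((m + 1 : ℕ) : R) - 1 - lam = c
      simp only [mul_add, add_mul, mul_sub, sub_mul, smul_sub, smul_mul_assoc, mul_smul_comm,
        mul_assoc]
      module
  refine ⟨fun X m _ _ => ?_, fun X Y Z m _ hm => ?_⟩
  · rw [hB]; simp
  · have hj := hJ X Y Z m hm
    rw [hB' X (B Y Z), hB' Y (B Z X), hB' Z (B X Y), hS _ _ _ hm, hS _ _ _ hm, hS _ _ _ hm]
    generalize ∑ i ∈ Icc (m + 1) n, (X i * B Y Z i - B Y Z i * X i) = JX at *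
    generalize ∑ i ∈ Icc (m + 1) n, (Y i * B Z X i - B Z X i * Y i) = JY at *
    generalize ∑ i ∈ Icc (m + 1) n, (Z i * B X Y i - B X Y i * Z i) = JZ at *
    have hj2 := eq_sub_of_add_eq' hj
    rw [hj2, hB' X Y, hB' Y Z, hB' Z X]
    generalize ∑ i ∈ Icc (m + 1) n, (X i * Y i - Y i * X i) = QZ
    generalize ∑ i ∈ Icc (m + 1) n, (Y i * Z i - Z i * Y i) = QX
    generalize ∑ i ∈ Icc (m + 1) n, (Z i * X i - X i * Z i) = QY
    generalize ∑ i ∈ Icc (m + 1) n, X i = SX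
    generalize ∑ i ∈ Icc (m + 1) n, Y i = SY
    generalize ∑ i ∈ Icc (m + 1) n, Z i = SZ
    generalize (m : R) - 1 - lam = c
    simp only [mul_add, add_mul, mul_sub, sub_mul, smul_add, smul_sub, smul_mul_assoc,
      mul_smul_comm, mul_assoc]
    module
end

section
/- Let R be a commutative ring, r ≥ 1, n ≥ 1, and let A_1,…,A_n be r×r matrices over R. For 1 ≤ l ≤ n set S_l = Σ_{i=1}^{l} A_i and K_l = Tr(S_l²). Then the bending Hamiltonians K_a and K_b are in involution with respect to the product Lie–Poisson structure: for all 1 ≤ a ≤ b ≤ n, Σ_{i=1}^{n} Tr( A_i · [ 2·S_a·1_{i≤a}, 2·S_b·1_{i≤b} ] ) = 0, where 2·S_l·1_{i≤l} is the i-th component of the gradient of K_l and [X,Y] = XY − YX. Equivalently, Σ_{i=1}^{a} Tr( A_i·(S_a·S_b − S_b·S_a) ) = 0. -/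
open Finset

/-- The bending Hamiltonians `K_l = Tr((Σ_{i≤l} A_i)²)` are in involution with
respect to the product Lie–Poisson structure on `n`-tuples of `r×r` matrices:
the Lie–Poisson bracket of `K_a` and `K_b`, computed from their gradients
`i ↦ 2·S_l·1_{i≤l}`, vanishes; equivalently
`Σ_{i≤a} Tr(A_i·(S_a S_b − S_b S_a)) = 0`. -/
theorem bending_hamiltonians_in_involution (R : Type*) [CommRing R]
    (r n : ℕ) (hr : 1 ≤ r) (hn : 1 ≤ n)
    (A : ℕ → Matrix (Fin r) (Fin r) R)
    (S : ℕ → Matrix (Fin r) (Fin r) R)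
    (hS : ∀ l, S l = ∑ i ∈ Icc 1 l, A i)
    (a b : ℕ) (ha : 1 ≤ a) (hab : a ≤ b) (hbn : b ≤ n) :
    (∑ i ∈ Icc 1 n, Matrix.trace (A i *
        ((if i ≤ a then (2 : R) • S a else 0) * (if i ≤ b then (2 : R) • S b else 0)
          - (if i ≤ b then (2 : R) • S b else 0) * (if i ≤ a then (2 : R) • S a else 0)))
      = 0)
    ∧ (∑ i ∈ Icc 1 a, Matrix.trace (A i * (S a * S b - S b * S a)) = 0) := by
  have h2 : ∑ i ∈ Icc 1 a, Matrix.trace (A i * (S a * S b - S b * S a)) = 0 := by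
    rw [← Matrix.trace_sum, ← Finset.sum_mul, ← hS a, mul_sub, Matrix.trace_sub,
      ← mul_assoc (S a) (S b) (S a), Matrix.trace_mul_comm (S a * S b) (S a), sub_self]
  refine ⟨?_, h2⟩
  have hsub : Icc 1 a ⊆ Icc 1 n := Finset.Icc_subset_Icc le_rfl (hab.trans hbn)
  rw [← Finset.sum_subset hsub]
  · have h3 : ∀ i ∈ Icc 1 a, Matrix.trace (A i *
        ((if i ≤ a then (2 : R) • S a else 0) * (if i ≤ b then (2 : R) • S b else 0)
          - (if i ≤ b then (2 : R) • S b else 0) * (if i ≤ a then (2 : R) • S a else 0)))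
        = (2 * 2 : R) * Matrix.trace (A i * (S a * S b - S b * S a)) := by
      intro i hi
      have hia : i ≤ a := (Finset.mem_Icc.mp hi).2
      rw [if_pos hia, if_pos (hia.trans hab), smul_mul_smul_comm, smul_mul_smul_comm,
        ← smul_sub, mul_smul_comm, Matrix.trace_smul, smul_eq_mul]
    rw [Finset.sum_congr rfl h3, ← Finset.mul_sum, h2, mul_zero]
  · intro i hi hia
    have h : ¬ i ≤ a := fun h => hia (Finset.mem_Icc.mpr ⟨(Finset.mem_Icc.mp hi).1, h⟩)
    simp [h]
end
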